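/- arXiv:2510.11071 — 2 statements merged into one kernel-verified Lean document; each statement's English description precedes it below -/
import Mathlib

section
/- Let B_n be the Bernstein operator on [0,1] and k a positive integer. For every f ∈ C^{2k}([0,1]), ‖(B_n - I)^k f‖_∞ ≤ C(k) · ‖f‖_{C^{2k}} · n^{-k}, where ‖f‖_{C^{2k}} = ∑_{j=0}^{2k} ‖f^{(j)}‖_∞ and C(k) depends only on k. -/
/-- The Bernstein operator of degree `n` on `[0,1]`. -/
noncomputable def bernsteinOp (n : ℕ) (f : ℝ → ℝ) (x : ℝ) : ℝ :=
  ∑ k ∈ Finset.range (n + 1),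
    f (k / n) * (n.choose k : ℝ) * x ^ k * (1 - x) ^ (n - k)

/-!
Two derivatives of `f` buy one factor `1 / n`: since `B_n` is positive and reproduces affine
functions, subtracting the tangent line of `f` at `x` leaves at most `‖f''‖` times the variance
`x (1 - x) / n` of the Bernstein weights. To iterate this, the same gain is needed in `C^m` norms,
losing two derivatives each time. Summation by parts gives `(B_{n+1} f)' = B_n (D_n f)`, where the
difference quotient `D_n f` is `O(1 / n)`-close to `f'` in `C^m`, so the estimate for `C^{m+1}`
follows from the one for `C^m`.
-/

open Finset Polynomial
open scoped unitInterval

section BoundedDerivs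

variable {𝕜 F : Type*} [NontriviallyNormedField 𝕜] [NormedAddCommGroup F] [NormedSpace 𝕜 F]

/-- `f` lies in the ball of radius `M` of `C^N(s)`, where `C^N(s)` carries the maximum over `j ≤ N`
of the sup norms of the `j`-th derivatives within `s`. -/
structure HasBoundedDerivsOn (N : ℕ) (M : ℝ) (f : 𝕜 → F) (s : Set 𝕜) : Prop where
  contDiffOn : ContDiffOn 𝕜 N f s
  norm_iteratedDerivWithin_le : ∀ j ≤ N, ∀ x ∈ s, ‖iteratedDerivWithin j f s x‖ ≤ M

namespace HasBoundedDerivsOn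

variable {N j : ℕ} {M M' : ℝ} {f f' g : 𝕜 → F} {s : Set 𝕜} {x : 𝕜}

lemma norm_le (hf : HasBoundedDerivsOn N M f s) (hx : x ∈ s) : ‖f x‖ ≤ M := by
  simpa using hf.norm_iteratedDerivWithin_le 0 N.zero_le x hx

lemma nonneg (hf : HasBoundedDerivsOn N M f s) (hs : s.Nonempty) : 0 ≤ M :=
  hs.elim fun _ hx => (norm_nonneg _).trans (hf.norm_le hx)

lemma mono (hf : HasBoundedDerivsOn N M f s) (hM : M ≤ M') : HasBoundedDerivsOn N M' f s :=
  ⟨hf.contDiffOn, fun j hj x hx => (hf.norm_iteratedDerivWithin_le j hj x hx).trans hM⟩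

lemma of_le {N' : ℕ} (hf : HasBoundedDerivsOn N M f s) (hN : N' ≤ N) :
    HasBoundedDerivsOn N' M f s :=
  ⟨hf.contDiffOn.of_le (mod_cast hN),
    fun j hj => hf.norm_iteratedDerivWithin_le j (hj.trans hN)⟩

lemma congr (hf : HasBoundedDerivsOn N M f s) (hfg : Set.EqOn g f s) :
    HasBoundedDerivsOn N M g s where
  contDiffOn := hf.contDiffOn.congr hfg
  norm_iteratedDerivWithin_le j hj x hx := by
    rw [iteratedDerivWithin_congr hfg hx]
    exact hf.norm_iteratedDerivWithin_le j hj x hx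

lemma of_continuousOn (hf : ContinuousOn f s) (hfM : ∀ x ∈ s, ‖f x‖ ≤ M) :
    HasBoundedDerivsOn 0 M f s where
  contDiffOn := contDiffOn_zero.2 hf
  norm_iteratedDerivWithin_le j hj x hx := by
    rw [Nat.le_zero.1 hj, iteratedDerivWithin_zero]
    exact hfM x hx

lemma zero (hM : 0 ≤ M) : HasBoundedDerivsOn N M (0 : 𝕜 → F) s where
  contDiffOn := contDiffOn_const
  norm_iteratedDerivWithin_le j _ x _ := by
    rwa [iteratedDerivWithin_const_zero, norm_zero]

lemma add (hs : UniqueDiffOn 𝕜 s) (hf : HasBoundedDerivsOn N M f s)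
    (hg : HasBoundedDerivsOn N M' g s) : HasBoundedDerivsOn N (M + M') (f + g) s where
  contDiffOn := hf.contDiffOn.add hg.contDiffOn
  norm_iteratedDerivWithin_le j hj x hx := by
    rw [iteratedDerivWithin_add hx hs ((hf.of_le hj).contDiffOn x hx)
      ((hg.of_le hj).contDiffOn x hx)]
    exact norm_add_le_of_le (hf.norm_iteratedDerivWithin_le j hj x hx)
      (hg.norm_iteratedDerivWithin_le j hj x hx)

lemma hasDerivWithinAt (hf : HasBoundedDerivsOn (N + 1) M f s) (hx : x ∈ s) :
    HasDerivWithinAt f (derivWithin f s x) s x :=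
  (hf.contDiffOn.differentiableOn (by simp) x hx).hasDerivWithinAt

protected lemma derivWithin (hs : UniqueDiffOn 𝕜 s) (hf : HasBoundedDerivsOn (N + 1) M f s) :
    HasBoundedDerivsOn N M (derivWithin f s) s where
  contDiffOn := hf.contDiffOn.derivWithin hs (by simp)
  norm_iteratedDerivWithin_le j hj := by
    rw [← iteratedDerivWithin_succ']
    exact hf.norm_iteratedDerivWithin_le (j + 1) (by lia)

protected lemma iteratedDerivWithin (hs : UniqueDiffOn 𝕜 s)
    (hf : HasBoundedDerivsOn (N + j) M f s) :
    HasBoundedDerivsOn N M (iteratedDerivWithin j f s) s := by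
  induction j generalizing f with
  | zero => simpa using hf
  | succ j ih =>
    rw [iteratedDerivWithin_succ']
    exact ih (hf.derivWithin hs)

lemma of_hasDerivWithinAt (hs : UniqueDiffOn 𝕜 s)
    (hff' : ∀ x ∈ s, HasDerivWithinAt f (f' x) s x) (hfM : ∀ x ∈ s, ‖f x‖ ≤ M)
    (hf' : HasBoundedDerivsOn N M f' s) : HasBoundedDerivsOn (N + 1) M f s := by
  have hderiv : HasBoundedDerivsOn N M (derivWithin f s) s :=
    hf'.congr fun x hx => (hff' x hx).derivWithin (hs x hx)
  refine ⟨?_, fun j hj x hx => ?_⟩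
  · exact_mod_cast (contDiffOn_succ_iff_derivWithin hs).2
      ⟨fun x hx => (hff' x hx).differentiableWithinAt, by simp, hderiv.contDiffOn⟩
  · cases j with
    | zero => simpa using hfM x hx
    | succ j =>
      rw [iteratedDerivWithin_succ']
      exact hderiv.norm_iteratedDerivWithin_le j (by lia) x hx

end HasBoundedDerivsOn

end BoundedDerivs

section MeanValue

variable {E : Type*} [NormedAddCommGroup E] [NormedSpace ℝ E] {M r a b x : ℝ} {f : ℝ → E}
  {s : Set ℝ}

lemma HasBoundedDerivsOn.norm_image_sub_le (hconv : Convex ℝ s) (hs : UniqueDiffOn ℝ s)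
    (hf : HasBoundedDerivsOn 1 M f s) (ha : a ∈ s) (hb : b ∈ s) : ‖f b - f a‖ ≤ M * ‖b - a‖ :=
  hconv.norm_image_sub_le_of_norm_derivWithin_le (hf.contDiffOn.differentiableOn (by simp))
    (fun _ hx => (hf.derivWithin hs).norm_le hx) ha hb

lemma HasBoundedDerivsOn.norm_image_sub_sub_smul_derivWithin_le (hconv : Convex ℝ s)
    (hs : UniqueDiffOn ℝ s) (hf : HasBoundedDerivsOn 2 M f s) (hx : x ∈ s)
    (ha : a ∈ s ∩ Metric.closedBall x r) (hb : b ∈ s ∩ Metric.closedBall x r) :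
    ‖f b - f a - (b - a) • derivWithin f s x‖ ≤ M * r * ‖b - a‖ := by
  set v := derivWithin f s x
  have hderiv : ∀ z ∈ s ∩ Metric.closedBall x r, HasDerivWithinAt (fun z => f z - z • v)
      (derivWithin f s z - v) (s ∩ Metric.closedBall x r) z := fun z hz => by
    simpa using ((hf.hasDerivWithinAt hz.1).mono Set.inter_subset_left).fun_sub
      ((hasDerivWithinAt_id z _).smul_const v)
  have hbound : ∀ z ∈ s ∩ Metric.closedBall x r, ‖derivWithin f s z - v‖ ≤ M * r :=
    fun z hz => ((hf.derivWithin hs).norm_image_sub_le hconv hs hx hz.1).trans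
      (mul_le_mul_of_nonneg_left (mem_closedBall_iff_norm.1 hz.2) (hf.nonneg ⟨x, hx⟩))
  have hmvt := (hconv.inter (convex_closedBall x r)).norm_image_sub_le_of_norm_hasDerivWithin_le
    hderiv hbound ha hb
  rwa [sub_sub_sub_comm, ← sub_smul] at hmvt

end MeanValue

section DiffQuot

variable {E : Type*} [NormedAddCommGroup E] [NormedSpace ℝ E] {N p : ℕ} {M s t : ℝ} {f : ℝ → E}

/-- The contraction of `[0,1]` onto `[s/(p+1), (p+s)/(p+1)]`. For `s = 0, 1` it maps the grid of
mesh `1/p` to the first, respectively last, `p + 1` points of the grid of mesh `1/(p+1)`. -/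
noncomputable def gridShift (p : ℕ) (s t : ℝ) : ℝ := (p * t + s) / (p + 1)

lemma gridShift_mem (hs : s ∈ I) (ht : t ∈ I) : gridShift p s t ∈ I := by
  obtain ⟨hs₀, hs₁⟩ := hs
  obtain ⟨ht₀, ht₁⟩ := ht
  refine ⟨by unfold gridShift; positivity, (div_le_one (by positivity)).2 ?_⟩
  gcongr
  exact mul_le_of_le_one_right p.cast_nonneg ht₁

lemma gridShift_mem_closedBall (hs : s ∈ I) (ht : t ∈ I) :
    gridShift p s t ∈ Metric.closedBall t (1 / (p + 1)) := by
  have hdiff : gridShift p s t - t = (s - t) / (p + 1) := by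
    unfold gridShift; field_simp; ring
  rw [mem_closedBall_iff_norm, hdiff, Real.norm_eq_abs, abs_div,
    abs_of_pos (by positivity : (0 : ℝ) < p + 1)]
  gcongr
  exact abs_sub_le_of_nonneg_of_le hs.1 hs.2 ht.1 ht.2

lemma gridShift_one_sub_gridShift_zero (p : ℕ) (t : ℝ) :
    gridShift p 1 t - gridShift p 0 t = 1 / (p + 1) := by
  unfold gridShift; ring

lemma hasDerivAt_gridShift (p : ℕ) (s t : ℝ) :
    HasDerivAt (gridShift p s) (p / (p + 1)) t := by
  have hderiv := (((hasDerivAt_id' t).const_mul (p : ℝ)).add_const s).div_const ((p : ℝ) + 1)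
  rwa [mul_one] at hderiv

/-- The difference quotient of step `1/(p+1)` whose Bernstein operator of degree `p` is the
derivative of the Bernstein operator of degree `p + 1`. -/
noncomputable def gridDiffQuot (p : ℕ) (f : ℝ → E) (t : ℝ) : E :=
  ((p : ℝ) + 1) • (f (gridShift p 1 t) - f (gridShift p 0 t))

lemma contDiffOn_gridDiffQuot (hf : ContDiffOn ℝ N f I) : ContDiffOn ℝ N (gridDiffQuot p f) I := by
  have hcomp (s : ℝ) (hs : s ∈ I) : ContDiffOn ℝ N (fun t => f (gridShift p s t)) I :=
    hf.comp (by unfold gridShift; fun_prop) fun _ ht => gridShift_mem hs ht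
  exact ((hcomp 1 unitInterval.one_mem).sub (hcomp 0 unitInterval.zero_mem)).const_smul _

lemma hasDerivWithinAt_gridDiffQuot {f' : ℝ → E} (hf : ∀ t ∈ I, HasDerivWithinAt f (f' t) I t)
    (ht : t ∈ I) :
    HasDerivWithinAt (gridDiffQuot p f) ((p / (p + 1) : ℝ) • gridDiffQuot p f' t) I t := by
  have hcomp (s : ℝ) (hs : s ∈ I) : HasDerivWithinAt (fun t => f (gridShift p s t))
      ((p / (p + 1) : ℝ) • f' (gridShift p s t)) I t :=
    (hf _ (gridShift_mem hs ht)).scomp t (hasDerivAt_gridShift p s t).hasDerivWithinAt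
      fun _ hu => gridShift_mem hs hu
  refine (((hcomp 1 unitInterval.one_mem).sub
    (hcomp 0 unitInterval.zero_mem)).const_smul ((p : ℝ) + 1)).congr_deriv ?_
  rw [gridDiffQuot, ← smul_sub, smul_comm]

lemma iteratedDerivWithin_gridDiffQuot (hf : ContDiffOn ℝ N f I) :
    Set.EqOn (iteratedDerivWithin N (gridDiffQuot p f) I)
      (fun t => (p / (p + 1) : ℝ) ^ N • gridDiffQuot p (iteratedDerivWithin N f I) t) I := by
  induction N with
  | zero => intro t _; simp
  | succ N ih =>
    intro t ht
    have hdiff : ∀ u ∈ I, HasDerivWithinAt (iteratedDerivWithin N f I)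
        (iteratedDerivWithin (N + 1) f I u) I u := fun u hu => by
      rw [iteratedDerivWithin_succ]
      exact (hf.differentiableOn_iteratedDerivWithin (mod_cast N.lt_succ_self)
        uniqueDiffOn_Icc_zero_one u hu).hasDerivWithinAt
    have hIH := ih (hf.of_le (mod_cast N.le_succ))
    rw [iteratedDerivWithin_succ, derivWithin_congr hIH (hIH ht),
      ((hasDerivWithinAt_gridDiffQuot hdiff ht).fun_const_smul _).derivWithin
        (uniqueDiffOn_Icc_zero_one t ht), smul_smul, pow_succ]

lemma norm_gridDiffQuot_le (hf : HasBoundedDerivsOn 1 M f I) (ht : t ∈ I) :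
    ‖gridDiffQuot p f t‖ ≤ M := by
  have hp : (0 : ℝ) < p + 1 := by positivity
  have hmvt := hf.norm_image_sub_le (convex_Icc 0 1) uniqueDiffOn_Icc_zero_one
    (gridShift_mem (p := p) unitInterval.zero_mem ht)
    (gridShift_mem (p := p) unitInterval.one_mem ht)
  rw [gridShift_one_sub_gridShift_zero, Real.norm_of_nonneg (by positivity), mul_one_div,
    le_div_iff₀' hp] at hmvt
  rwa [gridDiffQuot, norm_smul, Real.norm_of_nonneg hp.le]

lemma norm_gridDiffQuot_sub_derivWithin_le (hf : HasBoundedDerivsOn 2 M f I) (ht : t ∈ I) :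
    ‖gridDiffQuot p f t - derivWithin f I t‖ ≤ M / (p + 1) := by
  have hp : (0 : ℝ) < p + 1 := by positivity
  have hmem (s : ℝ) (hs : s ∈ I) :
      gridShift p s t ∈ I ∩ Metric.closedBall t (1 / (p + 1)) :=
    ⟨gridShift_mem hs ht, gridShift_mem_closedBall hs ht⟩
  have hmvt := hf.norm_image_sub_sub_smul_derivWithin_le (convex_Icc 0 1)
    uniqueDiffOn_Icc_zero_one ht (hmem 0 unitInterval.zero_mem) (hmem 1 unitInterval.one_mem)
  rw [gridShift_one_sub_gridShift_zero, Real.norm_of_nonneg (by positivity), mul_one_div,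
    mul_one_div, le_div_iff₀' hp] at hmvt
  have hscale : gridDiffQuot p f t - derivWithin f I t = ((p : ℝ) + 1) •
      (f (gridShift p 1 t) - f (gridShift p 0 t) - (1 / ((p : ℝ) + 1)) • derivWithin f I t) := by
    rw [smul_sub, smul_smul, mul_one_div_cancel hp.ne', one_smul, gridDiffQuot]
  rwa [hscale, norm_smul, Real.norm_of_nonneg hp.le]

lemma div_add_one_pow_mem_unitInterval (p j : ℕ) : (p / (p + 1) : ℝ) ^ j ∈ I :=
  unitInterval.submonoid.pow_mem
    (unitInterval.div_mem p.cast_nonneg (by positivity) (by simp)) j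

lemma one_sub_div_add_one_pow_le (p j : ℕ) :
    1 - (p / (p + 1) : ℝ) ^ j ≤ j / (p + 1) := by
  have hratio : (p / (p + 1) : ℝ) = 1 + -(1 / (p + 1)) := by field_simp; ring
  have hstep : 1 / ((p : ℝ) + 1) ≤ 1 := (div_le_one (by positivity)).2 (by simp)
  have hbernoulli := one_add_mul_le_pow (a := -(1 / ((p : ℝ) + 1))) (by linarith) j
  rw [hratio]
  linear_combination hbernoulli

protected lemma HasBoundedDerivsOn.gridDiffQuot (hf : HasBoundedDerivsOn (N + 1) M f I) :
    HasBoundedDerivsOn N M (gridDiffQuot p f) I where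
  contDiffOn := contDiffOn_gridDiffQuot (hf.of_le N.le_succ).contDiffOn
  norm_iteratedDerivWithin_le j hj t ht := by
    have hfj : HasBoundedDerivsOn 1 M (iteratedDerivWithin j f I) I :=
      (hf.of_le (by lia)).iteratedDerivWithin uniqueDiffOn_Icc_zero_one
    obtain ⟨hρ₀, hρ₁⟩ := div_add_one_pow_mem_unitInterval p j
    rw [iteratedDerivWithin_gridDiffQuot (hf.of_le (by lia)).contDiffOn ht, norm_smul,
      Real.norm_of_nonneg hρ₀]
    exact (mul_le_of_le_one_left (norm_nonneg _) hρ₁).trans (norm_gridDiffQuot_le hfj ht)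

lemma HasBoundedDerivsOn.gridDiffQuot_sub_derivWithin (hf : HasBoundedDerivsOn (N + 2) M f I) :
    HasBoundedDerivsOn N ((N + 1) * M / (p + 1))
      (gridDiffQuot p f - derivWithin f I) I where
  contDiffOn := (hf.of_le (by lia)).gridDiffQuot.contDiffOn.sub
    ((hf.of_le (by lia)).derivWithin uniqueDiffOn_Icc_zero_one).contDiffOn
  norm_iteratedDerivWithin_le j hj t ht := by
    have hM : 0 ≤ M := hf.nonneg ⟨t, ht⟩
    have hfj : HasBoundedDerivsOn 2 M (iteratedDerivWithin j f I) I :=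
      (hf.of_le (by lia)).iteratedDerivWithin uniqueDiffOn_Icc_zero_one
    set q := gridDiffQuot p (iteratedDerivWithin j f I) t
    set d := derivWithin (iteratedDerivWithin j f I) I t
    set ρ : ℝ := p / (p + 1)
    have hρ : ρ ^ j ≤ 1 := (div_add_one_pow_mem_unitInterval p j).2
    have hsplit : iteratedDerivWithin j
        (gridDiffQuot p f - derivWithin f I) I t = (q - d) - (1 - ρ ^ j) • q := by
      rw [iteratedDerivWithin_sub ht uniqueDiffOn_Icc_zero_one
        ((hf.of_le (by lia)).gridDiffQuot.contDiffOn t ht)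
        (((hf.of_le (by lia)).derivWithin uniqueDiffOn_Icc_zero_one).contDiffOn t ht),
        iteratedDerivWithin_gridDiffQuot (hf.of_le (by lia)).contDiffOn ht,
        ← iteratedDerivWithin_succ', iteratedDerivWithin_succ]
      module
    calc ‖iteratedDerivWithin j (gridDiffQuot p f - derivWithin f I) I t‖
        ≤ ‖q - d‖ + (1 - ρ ^ j) * ‖q‖ := by
          rw [hsplit]
          refine (norm_sub_le _ _).trans_eq ?_
          rw [norm_smul, Real.norm_of_nonneg (sub_nonneg.2 hρ)]
      _ ≤ M / (p + 1) + j / (p + 1) * M := by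
          gcongr
          · exact norm_gridDiffQuot_sub_derivWithin_le hfj ht
          · exact one_sub_div_add_one_pow_le p j
          · exact norm_gridDiffQuot_le (hfj.of_le one_le_two) ht
      _ = (j + 1) * M / (p + 1) := by ring
      _ ≤ (N + 1) * M / (p + 1) := by gcongr

end DiffQuot

section Bernstein

variable {n m : ℕ} {M x : ℝ} {f g u : ℝ → ℝ}

lemma continuous_bernsteinOp (n : ℕ) (f : ℝ → ℝ) : Continuous (bernsteinOp n f) := by
  unfold bernsteinOp
  fun_prop

lemma bernsteinOp_eq_sum_eval (n : ℕ) (f : ℝ → ℝ) (x : ℝ) :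
    bernsteinOp n f x = ∑ k ∈ range (n + 1), f (k / n) * (bernsteinPolynomial ℝ n k).eval x := by
  simp [bernsteinOp, bernsteinPolynomial, mul_assoc]

lemma eval_bernsteinPolynomial_nonneg (hx : x ∈ I) (n k : ℕ) :
    0 ≤ (bernsteinPolynomial ℝ n k).eval x :=
  bernstein_nonneg (x := ⟨x, hx⟩)

lemma abs_bernsteinOp_sub_bernsteinOp_le (hfg : ∀ t ∈ I, |f t - g t| ≤ u t) (hx : x ∈ I) :
    |bernsteinOp n f x - bernsteinOp n g x| ≤ bernsteinOp n u x := by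
  simp only [bernsteinOp_eq_sum_eval, ← sum_sub_distrib, ← sub_mul]
  refine (abs_sum_le_sum_abs _ _).trans (sum_le_sum fun k hk => ?_)
  have hnode : (k / n : ℝ) ∈ I :=
    unitInterval.div_mem k.cast_nonneg n.cast_nonneg
      (mod_cast Nat.lt_succ_iff.1 (mem_range.1 hk))
  have hweight := eval_bernsteinPolynomial_nonneg hx n k
  rw [abs_mul, abs_of_nonneg hweight]
  exact mul_le_mul_of_nonneg_right (hfg _ hnode) hweight

lemma bernsteinOp_affine (hn : n ≠ 0) (a b c x : ℝ) :
    bernsteinOp n (fun t => a + b * (t - c)) x = a + b * (x - c) := by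
  have hmass : ∑ k ∈ range (n + 1), (bernsteinPolynomial ℝ n k).eval x = 1 := by
    simpa [eval_finsetSum] using congrArg (eval x) (bernsteinPolynomial.sum ℝ n)
  have hmean : ∑ k ∈ range (n + 1), (k : ℝ) * (bernsteinPolynomial ℝ n k).eval x = n * x := by
    simpa [eval_finsetSum] using congrArg (eval x) (bernsteinPolynomial.sum_smul ℝ n)
  calc bernsteinOp n (fun t => a + b * (t - c)) x
      = (a - b * c) * ∑ k ∈ range (n + 1), (bernsteinPolynomial ℝ n k).eval x +
          b / n * ∑ k ∈ range (n + 1), (k : ℝ) * (bernsteinPolynomial ℝ n k).eval x := by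
        rw [bernsteinOp_eq_sum_eval, mul_sum, mul_sum, ← sum_add_distrib]
        exact sum_congr rfl fun k _ => by ring
    _ = a + b * (x - c) := by rw [hmass, hmean]; field_simp; ring

lemma bernsteinOp_mul_sq_sub (hn : n ≠ 0) (c x : ℝ) :
    bernsteinOp n (fun t => c * (t - x) ^ 2) x = c * (x * (1 - x)) / n := by
  have hvar : ∑ k ∈ range (n + 1), (n * x - k) ^ 2 * (bernsteinPolynomial ℝ n k).eval x =
      n * x * (1 - x) := by
    simpa [eval_finsetSum] using congrArg (eval x) (bernsteinPolynomial.variance ℝ n)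
  calc bernsteinOp n (fun t => c * (t - x) ^ 2) x
      = c / n ^ 2 * ∑ k ∈ range (n + 1),
          (n * x - k) ^ 2 * (bernsteinPolynomial ℝ n k).eval x := by
        rw [bernsteinOp_eq_sum_eval, mul_sum]
        exact sum_congr rfl fun k _ => by field_simp; ring
    _ = c * (x * (1 - x)) / n := by rw [hvar]; field_simp

lemma abs_bernsteinOp_sub_self_le (hn : n ≠ 0) (hf : HasBoundedDerivsOn 2 M f I) (hx : x ∈ I) :
    |bernsteinOp n f x - f x| ≤ M / n := by
  have htaylor : ∀ t ∈ I, |f t - (f x + derivWithin f I x * (t - x))| ≤ M * (t - x) ^ 2 := by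
    intro t ht
    have hmvt := hf.norm_image_sub_sub_smul_derivWithin_le (convex_Icc 0 1)
      uniqueDiffOn_Icc_zero_one hx (r := |t - x|) ⟨hx, by simp⟩ ⟨ht, Metric.mem_closedBall.2 le_rfl⟩
    rwa [Real.norm_eq_abs, Real.norm_eq_abs, mul_assoc, abs_mul_abs_self, ← sq, sub_sub,
      smul_eq_mul, mul_comm (t - x)] at hmvt
  have hM : 0 ≤ M := hf.nonneg ⟨x, hx⟩
  calc |bernsteinOp n f x - f x|
      = |bernsteinOp n f x - bernsteinOp n (fun t => f x + derivWithin f I x * (t - x)) x| := by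
        rw [bernsteinOp_affine hn, sub_self, mul_zero, add_zero]
    _ ≤ bernsteinOp n (fun t => M * (t - x) ^ 2) x := abs_bernsteinOp_sub_bernsteinOp_le htaylor hx
    _ = M * (x * (1 - x)) / n := bernsteinOp_mul_sq_sub hn M x
    _ ≤ M / n := by
        gcongr
        exact mul_le_of_le_one_right hM (by nlinarith [hx.1, hx.2])

lemma derivative_sum_C_mul_bernsteinPolynomial {R : Type*} [CommRing R] (n : ℕ) (a : ℕ → R) :
    derivative (∑ k ∈ range (n + 2), C (a k) * bernsteinPolynomial R (n + 1) k) =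
      ((n : R[X]) + 1) * ∑ k ∈ range (n + 1), C (a (k + 1) - a k) * bernsteinPolynomial R n k := by
  have hshift : ∑ k ∈ range (n + 1), C (a k) * bernsteinPolynomial R n k =
      ∑ k ∈ range (n + 1), C (a (k + 1)) * bernsteinPolynomial R n (k + 1) +
        C (a 0) * bernsteinPolynomial R n 0 := by
    rw [← sum_range_succ' fun k => C (a k) * bernsteinPolynomial R n k, sum_range_succ _ (n + 1),
      bernsteinPolynomial.eq_zero_of_lt R n.lt_succ_self, mul_zero, add_zero]
  simp only [map_sub, sub_mul, sum_sub_distrib]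
  rw [hshift, sum_range_succ', derivative_add, derivative_sum]
  simp only [derivative_C_mul, bernsteinPolynomial.derivative_succ_aux,
    bernsteinPolynomial.derivative_zero, Nat.cast_add_one, Nat.add_sub_cancel]
  rw [sub_add_eq_sub_sub, ← sum_sub_distrib, mul_sub, mul_sum, sub_eq_add_neg]
  congr 1
  · exact sum_congr rfl fun k _ => by ring
  · ring

lemma hasDerivAt_bernsteinOp_succ (p : ℕ) (f : ℝ → ℝ) (x : ℝ) :
    HasDerivAt (bernsteinOp (p + 1) f) (bernsteinOp p (gridDiffQuot p f) x) x := by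
  set P : ℝ[X] := ∑ k ∈ range (p + 2), C (f (k / (p + 1 : ℕ))) * bernsteinPolynomial ℝ (p + 1) k
  have heval : bernsteinOp (p + 1) f = fun x => P.eval x := by
    ext x
    simp [P, bernsteinOp_eq_sum_eval, eval_finsetSum]
  have hnode : ∀ k ∈ range (p + 1), gridDiffQuot p f (k / p) =
      (p + 1) * (f ((k + 1) / (p + 1)) - f (k / (p + 1))) := by
    intro k hk
    have hcancel : (p * (k / p) : ℝ) = k :=
      mul_div_cancel_of_imp' fun hp => by
        have hp : p = 0 := mod_cast hp
        subst hp
        simpa using hk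
    rw [gridDiffQuot, gridShift, gridShift, hcancel, add_zero, smul_eq_mul]
  rw [heval]
  refine (P.hasDerivAt x).congr_deriv ?_
  rw [derivative_sum_C_mul_bernsteinPolynomial, bernsteinOp_eq_sum_eval, eval_mul,
    eval_finsetSum, mul_sum]
  refine sum_congr rfl fun k hk => ?_
  rw [hnode k hk]
  simp [mul_assoc]

lemma bernsteinOp_zero_gridDiffQuot (f : ℝ → ℝ) :
    bernsteinOp 0 (gridDiffQuot 0 f) = gridDiffQuot 0 f := by
  ext x
  simp [bernsteinOp, gridDiffQuot, gridShift]

lemma HasBoundedDerivsOn.bernsteinOp_gridDiffQuot_sub {p : ℕ} {C : ℝ} (hC : 0 ≤ C)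
    (hrate : ∀ n : ℕ, n ≠ 0 → ∀ (f : ℝ → ℝ) (M : ℝ), HasBoundedDerivsOn (m + 2) M f I →
      HasBoundedDerivsOn m (C * M / n) (bernsteinOp n f - f) I)
    (hf : HasBoundedDerivsOn (m + 3) M f I) :
    HasBoundedDerivsOn m (2 * C * M / (p + 1))
      (bernsteinOp p (gridDiffQuot p f) - gridDiffQuot p f) I := by
  have hM : 0 ≤ M := hf.nonneg ⟨0, unitInterval.zero_mem⟩
  rcases eq_or_ne p 0 with rfl | hp
  · rw [bernsteinOp_zero_gridDiffQuot, sub_self]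
    exact .zero (by positivity)
  · refine (hrate p hp _ M hf.gridDiffQuot).mono ?_
    have hp' : (1 : ℝ) ≤ p := mod_cast Nat.one_le_iff_ne_zero.2 hp
    rw [div_le_div_iff₀ (by positivity) (by positivity)]
    nlinarith [mul_nonneg hC hM]

theorem exists_hasBoundedDerivsOn_bernsteinOp_sub (m : ℕ) :
    ∃ C : ℝ, 0 < C ∧ ∀ n : ℕ, n ≠ 0 → ∀ (f : ℝ → ℝ) (M : ℝ), HasBoundedDerivsOn (m + 2) M f I →
      HasBoundedDerivsOn m (C * M / n) (bernsteinOp n f - f) I := by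
  induction m with
  | zero =>
    refine ⟨1, one_pos, fun n hn f M hf => ?_⟩
    refine .of_continuousOn
      ((continuous_bernsteinOp n f).continuousOn.sub hf.contDiffOn.continuousOn) fun x hx => ?_
    rw [one_mul]
    exact abs_bernsteinOp_sub_self_le hn hf hx
  | succ m ih =>
    obtain ⟨C, hC, hrate⟩ := ih
    refine ⟨2 * C + (m + 1), by positivity, fun n hn f M hf => ?_⟩
    obtain ⟨p, rfl⟩ := Nat.exists_eq_succ_of_ne_zero hn
    have hM : 0 ≤ M := hf.nonneg ⟨0, unitInterval.zero_mem⟩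
    have hderiv : ∀ x ∈ I, HasDerivWithinAt (bernsteinOp (p + 1) f - f)
        (((bernsteinOp p (gridDiffQuot p f) - gridDiffQuot p f) +
          (gridDiffQuot p f - derivWithin f I)) x) I x := fun x hx => by
      rw [sub_add_sub_cancel]
      exact (hasDerivAt_bernsteinOp_succ p f x).hasDerivWithinAt.sub (hf.hasDerivWithinAt hx)
    refine .of_hasDerivWithinAt uniqueDiffOn_Icc_zero_one hderiv (fun x hx => ?_) ?_
    · refine (abs_bernsteinOp_sub_self_le hn (hf.of_le (by lia)) hx).trans ?_
      gcongr
      exact le_mul_of_one_le_left hM (by linarith [m.cast_nonneg (α := ℝ)])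
    · refine ((hf.bernsteinOp_gridDiffQuot_sub hC.le hrate).add uniqueDiffOn_Icc_zero_one
        (hf.of_le (by lia)).gridDiffQuot_sub_derivWithin).mono (le_of_eq ?_)
      push_cast
      ring

theorem exists_hasBoundedDerivsOn_iterate_bernsteinOp_sub (k m : ℕ) :
    ∃ C : ℝ, 0 < C ∧ ∀ n : ℕ, n ≠ 0 → ∀ (f : ℝ → ℝ) (M : ℝ), HasBoundedDerivsOn (m + 2 * k) M f I →
      HasBoundedDerivsOn m (C * M / (n : ℝ) ^ k) ((fun g => bernsteinOp n g - g)^[k] f) I := by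
  induction k generalizing m with
  | zero => exact ⟨1, one_pos, fun n _ f M hf => by simpa using hf⟩
  | succ k ih =>
    obtain ⟨C, hC, hiter⟩ := ih (m + 2)
    obtain ⟨C', hC', hstep⟩ := exists_hasBoundedDerivsOn_bernsteinOp_sub m
    refine ⟨C' * C, by positivity, fun n hn f M hf => ?_⟩
    rw [Function.iterate_succ_apply']
    convert hstep n hn _ _ (hiter n hn f M (hf.of_le (by lia))) using 1
    ring

end Bernstein

/-- Iterated Bernstein bias bound: for `f ∈ C^{2k}([0,1])` with all derivatives up to order
`2k` bounded by `M`, `‖(B_n - I)^k f‖_∞ ≤ C(k) · M · n^{-k}`. -/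
theorem iterated_bernstein_rate (k : ℕ) (hk : 0 < k) :
    ∃ C : ℝ, 0 < C ∧ ∀ n : ℕ, 0 < n → ∀ f : ℝ → ℝ, ∀ M : ℝ,
      ContDiffOn ℝ (2 * k) f (Set.Icc (0 : ℝ) 1) →
      (∀ j ≤ 2 * k, ∀ x ∈ Set.Icc (0 : ℝ) 1,
        |iteratedDerivWithin j f (Set.Icc (0 : ℝ) 1) x| ≤ M) →
      ∀ x ∈ Set.Icc (0 : ℝ) 1,
        |(fun g : ℝ → ℝ => fun y => bernsteinOp n g y - g y)^[k] f x| ≤ C * M / (n : ℝ) ^ k := by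
  obtain ⟨C, hC, hrate⟩ := exists_hasBoundedDerivsOn_iterate_bernsteinOp_sub k 0
  refine ⟨C, hC, fun n hn f M hf hM x hx => ?_⟩
  have hfM : HasBoundedDerivsOn (0 + 2 * k) M f I := by
    rw [zero_add]
    exact ⟨mod_cast hf, hM⟩
  exact (hrate n hn.ne' f M hfM).norm_le hx
end

section
/- Combining the iterated-Bernstein bound with the smoothness of g(q) = αq/(αq+1-q): for every positive integer k there is a constant C(α,k) such that for T ~ Binomial(n,q), |E[D_{n,k} g(T/n)] - g(q)| ≤ C(α,k) n^{-k}, where D_{n,k} = ∑_{j=0}^{k-1} C(k,j+1)(-1)^j B_n^j and B_n is the Bernstein operator. -/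
/-- The debiasing operator `D_{n,k} = ∑_{j=0}^{k-1} C(k,j+1)(-1)^j B_n^j`. -/
noncomputable def debiasOp (n k : ℕ) (f : ℝ → ℝ) (x : ℝ) : ℝ :=
  ∑ j ∈ Finset.range k, (k.choose (j + 1) : ℝ) * (-1 : ℝ) ^ j * (bernsteinOp n)^[j] f x

/-!
By the binomial theorem `B_n D_{n,k} = I - (I - B_n)^k`, so the error to bound is `(I - B_n)^k g`.

On monomials, `B_n x^m = ∑_i p_i x^i`, where `p_i` is the probability that `m` uniform draws from
`n` cells hit exactly `i` of them; in particular `1 - p_m ≤ m² / (2n)` (birthday problem). Hence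
`(I - B_n) x^m = ∑_{i<m} p_i (x^m - x^i)`, and induction on `k` gives
`|(I - B_n)^k x^m| ≤ (m² / n)^k` on `[0,1]`. This sums to a `O(n^{-k})` bound for every power series
`∑ c_m x^m` with `∑ |c_m| m^{2k} < ∞`.

For `α ≤ 1` the function `g` is such a series, in geometric form. For `α ≥ 1` it is one in the
variable `1 - x`, and `B_n` commutes with the reflection `x ↦ 1 - x`.
-/

open Finset Set

section Combinatorics

theorem mul_descFactorial_eq_descFactorial_succ_add (k i : ℕ) :
    k * k.descFactorial i = k.descFactorial (i + 1) + i * k.descFactorial i := by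
  rcases lt_or_ge k i with hki | hik
  · simp [Nat.descFactorial_of_lt hki]
  · rw [Nat.descFactorial_succ, ← add_mul, Nat.sub_add_cancel hik]

theorem pow_eq_sum_stirlingSecond_mul_descFactorial (k m : ℕ) :
    k ^ m = ∑ i ∈ range (m + 1), m.stirlingSecond i * k.descFactorial i := by
  induction m with
  | zero => simp
  | succ m ih =>
    have shift : ∑ i ∈ range (m + 1), i * (m.stirlingSecond i * k.descFactorial i) =
        ∑ i ∈ range (m + 1), (i + 1) * (m.stirlingSecond (i + 1) * k.descFactorial (i + 1)) := by
      have top : m.stirlingSecond (m + 1) = 0 := Nat.stirlingSecond_eq_zero_of_lt m.lt_succ_self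
      have := sum_range_succ' (fun i ↦ i * (m.stirlingSecond i * k.descFactorial i)) (m + 1)
      rw [sum_range_succ] at this
      simpa [top] using this
    calc k ^ (m + 1)
        = ∑ i ∈ range (m + 1), m.stirlingSecond i * (k * k.descFactorial i) := by
          rw [pow_succ', ih, mul_sum]
          exact sum_congr rfl fun i _ ↦ by ring
      _ = ∑ i ∈ range (m + 1), m.stirlingSecond i * k.descFactorial (i + 1) +
            ∑ i ∈ range (m + 1), i * (m.stirlingSecond i * k.descFactorial i) := by
          rw [← sum_add_distrib]
          exact sum_congr rfl fun i _ ↦ by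
            rw [mul_descFactorial_eq_descFactorial_succ_add]; ring
      _ = ∑ i ∈ range (m + 1), (m + 1).stirlingSecond (i + 1) * k.descFactorial (i + 1) := by
          rw [shift, ← sum_add_distrib]
          exact sum_congr rfl fun i _ ↦ by rw [Nat.stirlingSecond_succ_succ]; ring
      _ = _ := by simp [sum_range_succ' _ (m + 1)]

theorem descFactorial_mul_choose_add (i d j : ℕ) :
    (i + j).descFactorial i * (i + d).choose (i + j) =
      (i + d).descFactorial i * d.choose j := by
  have := Nat.choose_mul (n := i + d) (Nat.le_add_right i j)
  simp only [Nat.add_sub_cancel_left] at this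
  simp only [Nat.descFactorial_eq_factorial_mul_choose, mul_assoc]
  rw [mul_comm ((i + j).choose i), this]

theorem sum_descFactorial_mul_choose_mul_pow {R : Type*} [CommSemiring R] (n i : ℕ) (x y : R) :
    ∑ k ∈ range (n + 1), (k.descFactorial i : R) * n.choose k * x ^ k * y ^ (n - k) =
      n.descFactorial i * x ^ i * (x + y) ^ (n - i) := by
  rcases lt_or_ge n i with hni | hin
  · rw [Nat.descFactorial_of_lt hni, sum_eq_zero fun k hk ↦ ?_]
    · simp
    · simp [Nat.descFactorial_of_lt ((mem_range_succ_iff.1 hk).trans_lt hni)]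
  obtain ⟨d, rfl⟩ := Nat.exists_eq_add_of_le hin
  have low_terms : ∀ k ∈ range i,
      (k.descFactorial i : R) * (i + d).choose k * x ^ k * y ^ (i + d - k) = 0 := fun k hk ↦ by
    simp [Nat.descFactorial_of_lt (mem_range.1 hk)]
  rw [add_assoc, sum_range_add, sum_eq_zero low_terms, zero_add, Nat.add_sub_cancel_left, add_pow,
    mul_sum]
  refine sum_congr rfl fun j _ ↦ ?_
  rw [Nat.add_sub_add_left, ← Nat.cast_mul, descFactorial_mul_choose_add]
  push_cast
  ring

theorem pow_succ_sub_le_mul_descFactorial (n m : ℕ) :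
    (n : ℝ) ^ (m + 1) - m ^ 2 / 2 * n ^ m ≤ n * n.descFactorial m := by
  induction m with
  | zero => simp
  | succ m ih =>
    have truncated_sub : (n : ℝ) - m ≤ (n - m : ℕ) := by
      rw [sub_le_iff_le_add]; exact_mod_cast le_tsub_add
    have desc_le : (n.descFactorial m : ℝ) ≤ n ^ m := by exact_mod_cast n.descFactorial_le_pow m
    have step : ((n : ℝ) - m) * n.descFactorial m ≤ n.descFactorial (m + 1) := by
      rw [Nat.descFactorial_succ, Nat.cast_mul]
      gcongr
    calc (n : ℝ) ^ (m + 1 + 1) - ((m + 1 : ℕ) : ℝ) ^ 2 / 2 * n ^ (m + 1)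
        ≤ (n : ℝ) * ((n ^ (m + 1) - m ^ 2 / 2 * n ^ m) - m * n ^ m) := by
          have : (0 : ℝ) ≤ n ^ (m + 1) := by positivity
          push_cast
          linear_combination (1 / 2 : ℝ) * this
      _ ≤ (n : ℝ) * (n * n.descFactorial m - m * n.descFactorial m) := by gcongr
      _ ≤ (n : ℝ) * n.descFactorial (m + 1) := by rw [← sub_mul]; gcongr

end Combinatorics

section Occupancy

/-- The probability that `m` independent uniform draws from `n` cells hit exactly `i` distinct
cells. These are the coefficients of the Bernstein polynomial of `x ^ m`. -/
noncomputable def occupancyProb (n m i : ℕ) : ℝ :=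
  m.stirlingSecond i * n.descFactorial i / n ^ m

theorem occupancyProb_nonneg (n m i : ℕ) : 0 ≤ occupancyProb n m i := by
  unfold occupancyProb; positivity

variable {n : ℕ}

theorem sum_occupancyProb (hn : 0 < n) (m : ℕ) :
    ∑ i ∈ range (m + 1), occupancyProb n m i = 1 := by
  simp only [occupancyProb]
  rw [← sum_div, div_eq_one_iff_eq (by positivity)]
  exact_mod_cast (pow_eq_sum_stirlingSecond_mul_descFactorial n m).symm

theorem one_sub_le_occupancyProb_self (hn : 0 < n) (m : ℕ) :
    1 - (m : ℝ) ^ 2 / (2 * n) ≤ occupancyProb n m m := by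
  have hn' : (0 : ℝ) < n := by exact_mod_cast hn
  rw [occupancyProb, Nat.stirlingSecond_self, le_div_iff₀ (by positivity),
    ← mul_le_mul_iff_right₀ hn']
  calc (n : ℝ) * ((1 - (m : ℝ) ^ 2 / (2 * n)) * n ^ m)
      = (n : ℝ) ^ (m + 1) - (m : ℝ) ^ 2 / 2 * (n : ℝ) ^ m := by field_simp; ring
    _ ≤ (n : ℝ) * n.descFactorial m := pow_succ_sub_le_mul_descFactorial n m
    _ = (n : ℝ) * ((1 : ℕ) * n.descFactorial m) := by simp

theorem sum_range_occupancyProb_le (hn : 0 < n) (m : ℕ) :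
    ∑ i ∈ range m, occupancyProb n m i ≤ (m : ℝ) ^ 2 / (2 * n) := by
  have total := sum_occupancyProb hn m
  rw [sum_range_succ] at total
  linarith [one_sub_le_occupancyProb_self hn m]

theorem bernsteinOp_pow (n m : ℕ) (x : ℝ) :
    bernsteinOp n (· ^ m) x = ∑ i ∈ range (m + 1), occupancyProb n m i * x ^ i := by
  have moment (i : ℕ) : ∑ k ∈ range (n + 1),
      (k.descFactorial i : ℝ) * n.choose k * x ^ k * (1 - x) ^ (n - k) =
        n.descFactorial i * x ^ i := by
    simpa using sum_descFactorial_mul_choose_mul_pow n i x (1 - x)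
  have expand (k : ℕ) : ((k : ℝ) / n) ^ m =
      ∑ i ∈ range (m + 1), m.stirlingSecond i / (n : ℝ) ^ m * k.descFactorial i := by
    rw [div_pow, ← Nat.cast_pow, pow_eq_sum_stirlingSecond_mul_descFactorial, Nat.cast_sum, sum_div]
    exact sum_congr rfl fun i _ ↦ by push_cast; ring
  simp only [bernsteinOp, expand, sum_mul]
  rw [sum_comm]
  refine sum_congr rfl fun i _ ↦ ?_
  simp only [mul_assoc] at moment ⊢
  rw [← mul_sum, moment, occupancyProb]
  ring

end Occupancy

section Remainder

/-- The Bernstein operator `B_n` as an endomorphism of the space of real functions. -/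
noncomputable def bernsteinEnd (n : ℕ) : Module.End ℝ (ℝ → ℝ) where
  toFun := bernsteinOp n
  map_add' f g := by
    funext x
    simp only [bernsteinOp, Pi.add_apply, ← sum_add_distrib, add_mul]
  map_smul' c f := by
    funext x
    simp only [bernsteinOp, Pi.smul_apply, smul_eq_mul, mul_sum, RingHom.id_apply, mul_assoc]

/-- The operator `I - B_n`, whose `k`-th power is the error of the `k`-th debiased estimator. -/
noncomputable def bernsteinRemainder (n : ℕ) : Module.End ℝ (ℝ → ℝ) :=
  1 - bernsteinEnd n

theorem bernsteinRemainder_apply (n : ℕ) (f : ℝ → ℝ) (x : ℝ) :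
    bernsteinRemainder n f x = f x - bernsteinOp n f x :=
  rfl

theorem mul_sum_choose_smul_pow {R A : Type*} [CommRing R] [Ring A] [Algebra R A] (a : A) (k : ℕ) :
    a * ∑ j ∈ range k, ((k.choose (j + 1) : R) * (-1) ^ j) • a ^ j = 1 - (1 - a) ^ k := by
  have binomial : (1 - a) ^ k = ∑ j ∈ range (k + 1), ((k.choose j : R) * (-1) ^ j) • a ^ j := by
    rw [sub_eq_neg_add, (Commute.one_right (-a)).add_pow]
    refine sum_congr rfl fun j _ ↦ ?_
    rw [one_pow, mul_one, ← nsmul_eq_mul', ← neg_one_smul R a, smul_pow, mul_smul,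
      Nat.cast_smul_eq_nsmul]
  rw [binomial, sum_range_succ', mul_sum]
  simp [pow_succ']

theorem bernsteinOp_debiasOp (n k : ℕ) (f : ℝ → ℝ) :
    bernsteinOp n (debiasOp n k f) = f - (bernsteinRemainder n ^ k) f := by
  have debias_eq : debiasOp n k f = (∑ j ∈ range k,
      ((k.choose (j + 1) : ℝ) * (-1) ^ j) • bernsteinEnd n ^ j) f := by
    funext x
    simp only [debiasOp, LinearMap.sum_apply, Finset.sum_apply, LinearMap.smul_apply,
      Pi.smul_apply, smul_eq_mul, Module.End.pow_apply]
    rfl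
  calc bernsteinOp n (debiasOp n k f)
      = (bernsteinEnd n * ∑ j ∈ range k,
          ((k.choose (j + 1) : ℝ) * (-1) ^ j) • bernsteinEnd n ^ j) f := by rw [debias_eq]; rfl
    _ = f - (bernsteinRemainder n ^ k) f := by rw [mul_sum_choose_smul_pow]; rfl

theorem commute_bernsteinEnd_reflect {n : ℕ} (hn : 0 < n) :
    Commute (bernsteinEnd n) (LinearMap.funLeft ℝ ℝ (1 - · : ℝ → ℝ)) := by
  refine LinearMap.ext fun f ↦ funext fun x ↦ ?_
  change bernsteinOp n (fun y ↦ f (1 - y)) x = bernsteinOp n f (1 - x)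
  rw [bernsteinOp, ← sum_range_reflect, bernsteinOp]
  refine sum_congr rfl fun j hj ↦ ?_
  have hjn : j ≤ n := mem_range_succ_iff.1 hj
  have node : 1 - ((n - j : ℕ) : ℝ) / n = j / n := by
    rw [Nat.cast_sub hjn]; field_simp; ring
  rw [Nat.add_sub_cancel, Nat.choose_symm hjn, Nat.sub_sub_self hjn, node, sub_sub_cancel]
  ring

theorem bernsteinRemainder_pow_comp_one_sub {n : ℕ} (hn : 0 < n) (k : ℕ) (f : ℝ → ℝ) (x : ℝ) :
    (bernsteinRemainder n ^ k) (fun y ↦ f (1 - y)) x = (bernsteinRemainder n ^ k) f (1 - x) :=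
  have commute := ((Commute.one_left _).sub_left (commute_bernsteinEnd_reflect hn)).pow_left k
  congrFun (LinearMap.congr_fun commute.eq f) x

theorem hasSum_bernsteinRemainder_pow {n : ℕ} {ι : Type*} {F : ι → ℝ → ℝ} {f : ℝ → ℝ}
    (hF : ∀ x ∈ Icc (0 : ℝ) 1, HasSum (fun i ↦ F i x) (f x)) (k : ℕ) :
    ∀ x ∈ Icc (0 : ℝ) 1,
      HasSum (fun i ↦ (bernsteinRemainder n ^ k) (F i) x) ((bernsteinRemainder n ^ k) f x) := by
  induction k with
  | zero => simpa using hF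
  | succ k ih =>
    intro x hx
    simp only [pow_succ', Module.End.mul_apply, bernsteinRemainder_apply, bernsteinOp]
    refine (ih x hx).sub (hasSum_sum fun j hj ↦ ?_)
    have node_mem : (j : ℝ) / n ∈ Icc (0 : ℝ) 1 :=
      ⟨by positivity, div_le_one_of_le₀ (mod_cast mem_range_succ_iff.1 hj) n.cast_nonneg⟩
    exact (((ih _ node_mem).mul_right _).mul_right _).mul_right _

theorem bernsteinRemainder_monomial {n : ℕ} (hn : 0 < n) (m : ℕ) :
    bernsteinRemainder n (· ^ m) =
      ∑ i ∈ range m, occupancyProb n m i • ((· ^ m) - (· ^ i) : ℝ → ℝ) := by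
  funext x
  have total := sum_occupancyProb hn m
  rw [sum_range_succ] at total
  simp only [bernsteinRemainder_apply, bernsteinOp_pow, sum_range_succ, Finset.sum_apply,
    Pi.smul_apply, Pi.sub_apply, smul_eq_mul, mul_sub, sum_sub_distrib, ← sum_mul]
  linear_combination -x ^ m * total

theorem abs_bernsteinRemainder_pow_monomial_le {n : ℕ} (hn : 0 < n) (k m : ℕ) {x : ℝ}
    (hx : x ∈ Icc (0 : ℝ) 1) :
    |(bernsteinRemainder n ^ k) (· ^ m) x| ≤ ((m : ℝ) ^ 2 / n) ^ k := by
  induction k generalizing m with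
  | zero => simpa [abs_of_nonneg hx.1] using pow_le_one₀ hx.1 hx.2
  | succ k ih =>
    set M : ℝ := ((m : ℝ) ^ 2 / n) ^ k with hM
    have difference_le : ∀ i ∈ range m,
        |(bernsteinRemainder n ^ k) (· ^ m) x - (bernsteinRemainder n ^ k) (· ^ i) x| ≤
          2 * M := fun i hi ↦ by
      have him : (i : ℝ) ≤ m := by exact_mod_cast (mem_range.1 hi).le
      have ih_le : ((i : ℝ) ^ 2 / n) ^ k ≤ M := by rw [hM]; gcongr
      linarith [abs_sub ((bernsteinRemainder n ^ k) (· ^ m) x)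
        ((bernsteinRemainder n ^ k) (· ^ i) x), ih m, ih i]
    rw [pow_succ, Module.End.mul_apply, bernsteinRemainder_monomial hn, map_sum]
    simp only [map_smul, map_sub, Finset.sum_apply, Pi.smul_apply, Pi.sub_apply, smul_eq_mul]
    calc _ ≤ ∑ i ∈ range m, occupancyProb n m i * (2 * M) := by
          refine (abs_sum_le_sum_abs _ _).trans (sum_le_sum fun i hi ↦ ?_)
          rw [abs_mul, abs_of_nonneg (occupancyProb_nonneg n m i)]
          exact mul_le_mul_of_nonneg_left (difference_le i hi) (occupancyProb_nonneg n m i)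
      _ ≤ (m : ℝ) ^ 2 / (2 * n) * (2 * M) := by
          rw [← sum_mul]
          gcongr
          exact sum_range_occupancyProb_le hn m
      _ = ((m : ℝ) ^ 2 / n) ^ (k + 1) := by rw [hM]; ring

end Remainder

section Rate

/-- `(I - B_n)^k f = O(n^{-k})` uniformly on `[0,1]`: the rate at which the `k`-th debiased
estimator of `f` loses its bias. -/
def HasBernsteinRate (k : ℕ) (f : ℝ → ℝ) : Prop :=
  ∃ C : ℝ, ∀ n : ℕ, 0 < n → ∀ q ∈ Icc (0 : ℝ) 1, |(bernsteinRemainder n ^ k) f q| ≤ C / (n : ℝ) ^ k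

variable {k : ℕ} {f : ℝ → ℝ}

theorem HasBernsteinRate.exists_abs_bernsteinOp_debiasOp_sub_le (hf : HasBernsteinRate k f) :
    ∃ C : ℝ, 0 < C ∧ ∀ n : ℕ, 0 < n → ∀ q ∈ Icc (0 : ℝ) 1,
      |bernsteinOp n (debiasOp n k f) q - f q| ≤ C / (n : ℝ) ^ k := by
  obtain ⟨C, hC⟩ := hf
  refine ⟨max C 1, by positivity, fun n hn q hq ↦ ?_⟩
  rw [bernsteinOp_debiasOp, Pi.sub_apply, sub_sub_cancel_left, abs_neg]
  exact (hC n hn q hq).trans (by gcongr; exact le_max_left C 1)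

theorem HasBernsteinRate.of_comp_one_sub (hf : HasBernsteinRate k fun x ↦ f (1 - x)) :
    HasBernsteinRate k f := by
  obtain ⟨C, hC⟩ := hf
  refine ⟨C, fun n hn q hq ↦ ?_⟩
  have bound := hC n hn (1 - q) (Icc.mem_iff_one_sub_mem.1 hq)
  rwa [bernsteinRemainder_pow_comp_one_sub hn, sub_sub_cancel] at bound

theorem HasBernsteinRate.of_hasSum {c : ℕ → ℝ}
    (hc : Summable fun m : ℕ ↦ |c m| * (m : ℝ) ^ (2 * k))
    (hf : ∀ x ∈ Icc (0 : ℝ) 1, HasSum (fun m ↦ c m * x ^ m) (f x)) :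
    HasBernsteinRate k f := by
  refine ⟨∑' m : ℕ, |c m| * (m : ℝ) ^ (2 * k), fun n hn q hq ↦ ?_⟩
  have remainder_sum := hasSum_bernsteinRemainder_pow (n := n) hf k q hq
  refine remainder_sum.norm_le_of_bounded (hc.hasSum.div_const ((n : ℝ) ^ k)) fun m ↦ ?_
  have smul_monomial : (fun x : ℝ ↦ c m * x ^ m) = c m • (· ^ m) := rfl
  rw [smul_monomial, map_smul, Pi.smul_apply, smul_eq_mul, Real.norm_eq_abs, abs_mul, mul_div_assoc,
    pow_mul, ← div_pow]
  gcongr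
  exact abs_bernsteinRemainder_pow_monomial_le hn k m hq

theorem summable_succ_pow_mul_geometric {r : ℝ} (hr : |r| < 1) (d : ℕ) :
    Summable fun m : ℕ ↦ ((m + 1 : ℕ) : ℝ) ^ d * r ^ m := by
  simp only [Nat.cast_add, Nat.cast_one, add_pow, sum_mul, one_pow, mul_one]
  refine summable_sum fun i _ ↦ ?_
  simpa only [mul_right_comm] using
    (summable_pow_mul_geometric_of_norm_lt_one i hr).mul_right (d.choose i : ℝ)

theorem HasBernsteinRate.of_eqOn_geometric {a b r : ℝ} (hr : |r| < 1)
    (hf : ∀ x ∈ Icc (0 : ℝ) 1, f x = a + b * x * (1 - r * x)⁻¹) :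
    HasBernsteinRate k f := by
  let c : ℕ → ℝ
    | 0 => a
    | m + 1 => b * r ^ m
  refine .of_hasSum (c := c) ?_ fun x hx ↦ ?_
  · rw [← summable_nat_add_iff 1]
    have summable_abs := summable_succ_pow_mul_geometric (r := |r|) (by rwa [abs_abs]) (2 * k)
    refine (summable_abs.mul_left |b|).congr fun m ↦ ?_
    simp only [c, abs_mul, abs_pow]
    ring
  · have hrx : ‖r * x‖ < 1 := by
      rw [Real.norm_eq_abs, abs_mul, abs_of_nonneg hx.1]
      exact (mul_le_of_le_one_right (abs_nonneg r) hx.2).trans_lt hr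
    rw [hf x hx, ← hasSum_nat_add_iff' 1]
    have geometric := (hasSum_geometric_of_norm_lt_one hrx).mul_left (b * x)
    simp only [mul_pow] at geometric
    simpa [c, pow_succ', mul_assoc, mul_left_comm x] using geometric

/-- The function `g` of the theorem: the posterior probability of a hypothesis with prior
probability `x` and likelihood ratio `α` against its alternative. -/
noncomputable def binaryPosterior (α x : ℝ) : ℝ :=
  α * x / (α * x + 1 - x)

theorem hasBernsteinRate_binaryPosterior {α : ℝ} (hα : 0 < α) (k : ℕ) :
    HasBernsteinRate k (binaryPosterior α) := by
  rcases le_total α 1 with hα1 | hα1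
  · refine .of_eqOn_geometric (a := 0) (b := α) (r := 1 - α) ?_ fun x _ ↦ ?_
    · rw [abs_of_nonneg] <;> linarith
    · rw [binaryPosterior, zero_add, div_eq_mul_inv]; ring_nf
  · have hα_inv : α⁻¹ ≤ 1 := inv_le_one_of_one_le₀ hα1
    refine .of_comp_one_sub <|
      .of_eqOn_geometric (a := 1) (b := -α⁻¹) (r := 1 - α⁻¹) ?_ fun x hx ↦ ?_
    · rw [abs_of_nonneg] <;> linarith [inv_pos.2 hα]
    · have denom_pos : 0 < α * (1 - x) + x := by nlinarith [hx.1, hx.2]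
      have denom_eq : 1 - (1 - α⁻¹) * x = (α * (1 - x) + x) / α := by field_simp; ring
      rw [binaryPosterior, denom_eq, show α * (1 - x) + 1 - (1 - x) = α * (1 - x) + x by ring]
      field_simp
      ring

end Rate

/-- Debiased binary posterior estimation: for `g(q) = αq/(αq+1-q)` and `T ~ Binomial(n,q)`,
`|E[D_{n,k} g (T/n)] - g(q)| = |B_n(D_{n,k} g)(q) - g(q)| ≤ C(α,k) n^{-k}`. -/
theorem debiased_binary_posterior_rate (α : ℝ) (hα : 0 < α) (k : ℕ) (hk : 0 < k) :
    ∃ C : ℝ, 0 < C ∧ ∀ n : ℕ, 0 < n → ∀ q ∈ Set.Icc (0 : ℝ) 1,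
      |bernsteinOp n (debiasOp n k (fun x : ℝ => α * x / (α * x + 1 - x))) q
          - α * q / (α * q + 1 - q)| ≤ C / (n : ℝ) ^ k :=
  (hasBernsteinRate_binaryPosterior hα k).exists_abs_bernsteinOp_debiasOp_sub_le
end
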